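/- Let Φ be a quantum channel on n×n complex matrices with Kraus operators {K_j}, and let x, x⊥ ∈ ℂⁿ be orthogonal unit vectors. If Φ ∘ Ψ_{λ,x,x⊥}^{-1} is completely positive for some λ ∈ (0,1), then Φ(x⊥ x⊥†) Z x = 0 for every n×n matrix Z in the Hilbert–Schmidt orthogonal complement K_Φ^⊥ of span{K_j}. -/

import Mathlib

open Matrix Kronecker
open scoped ComplexOrder

noncomputable section

/-- The linear map `ρ ↦ A ρ Bᴴ`. -/
def sandwich₂ {m n : ℕ} (A B : Matrix (Fin m) (Fin n) ℂ) :
    Matrix (Fin n) (Fin n) ℂ →ₗ[ℂ] Matrix (Fin m) (Fin m) ℂ where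
  toFun ρ := A * ρ * Bᴴ
  map_add' X Y := by simp [Matrix.mul_add, Matrix.add_mul]
  map_smul' c X := by simp [Matrix.mul_smul, Matrix.smul_mul]

/-- The linear map `ρ ↦ A ρ Aᴴ`. -/
def sandwich {m n : ℕ} (A : Matrix (Fin m) (Fin n) ℂ) :
    Matrix (Fin n) (Fin n) ℂ →ₗ[ℂ] Matrix (Fin m) (Fin m) ℂ :=
  sandwich₂ A A

/-- The Choi matrix `C(Φ) = ∑ⱼₖ Eⱼₖ ⊗ Φ(Eⱼₖ)`. -/
def Choi {n m : ℕ} (Φ : Matrix (Fin n) (Fin n) ℂ →ₗ[ℂ] Matrix (Fin m) (Fin m) ℂ) :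
    Matrix (Fin n × Fin m) (Fin n × Fin m) ℂ :=
  ∑ j : Fin n, ∑ k : Fin n,
    (Matrix.single j k (1 : ℂ)) ⊗ₖ Φ (Matrix.single j k (1 : ℂ))

/-- Vectorization: `vec X = ∑ⱼ eⱼ ⊗ X eⱼ`, i.e. `(vec X) (j, i) = X i j`. -/
def vec {m n : ℕ} (X : Matrix (Fin m) (Fin n) ℂ) : Fin n × Fin m → ℂ :=
  fun p => X p.2 p.1

/-- Complete positivity (via the Choi characterization). -/
def IsCP {n : ℕ} (Φ : Matrix (Fin n) (Fin n) ℂ →ₗ[ℂ] Matrix (Fin n) (Fin n) ℂ) : Prop :=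
  (Choi Φ).PosSemidef

/-- Trace preservation. -/
def IsTP {n : ℕ} (Φ : Matrix (Fin n) (Fin n) ℂ →ₗ[ℂ] Matrix (Fin n) (Fin n) ℂ) : Prop :=
  ∀ ρ, (Φ ρ).trace = ρ.trace

/-- Quantum channel: completely positive and trace preserving. -/
def IsChannel {n : ℕ} (Φ : Matrix (Fin n) (Fin n) ℂ →ₗ[ℂ] Matrix (Fin n) (Fin n) ℂ) : Prop :=
  IsCP Φ ∧ IsTP Φ

/-- `K_λ = 1 - (1 - √(1-λ)) x x†`. -/
def Kmat {n : ℕ} (lam : ℝ) (x : Fin n → ℂ) : Matrix (Fin n) (Fin n) ℂ :=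
  1 - ((1 - Real.sqrt (1 - lam) : ℝ) : ℂ) • Matrix.vecMulVec x (star x)

/-- `L_λ = √λ y x†`. -/
def Lmat {n : ℕ} (lam : ℝ) (x y : Fin n → ℂ) : Matrix (Fin n) (Fin n) ℂ :=
  ((Real.sqrt lam : ℝ) : ℂ) • Matrix.vecMulVec y (star x)

/-- The elementary channel `Ψ_{λ,x,y} = K_λ (·) K_λ† + L_λ (·) L_λ†`. -/
def Psi {n : ℕ} (lam : ℝ) (x y : Fin n → ℂ) :
    Matrix (Fin n) (Fin n) ℂ →ₗ[ℂ] Matrix (Fin n) (Fin n) ℂ :=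
  sandwich (Kmat lam x) + sandwich (Lmat lam x y)

/-- For `λ ∈ [0,1)` and `⟨x,y⟩ = 0`, the inverse of `Ψ_{λ,x,y}`:
`Ψ_{λ,x,y}⁻¹ = K_λ⁻¹ (·) K_λ⁻¹ - (1-λ)⁻¹ L_λ (·) L_λ†`. -/
def PsiInv {n : ℕ} (lam : ℝ) (x y : Fin n → ℂ) :
    Matrix (Fin n) (Fin n) ℂ →ₗ[ℂ] Matrix (Fin n) (Fin n) ℂ :=
  sandwich (Kmat lam x)⁻¹ - (((1 - lam)⁻¹ : ℝ) : ℂ) • sandwich (Lmat lam x y)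

/-- `Φ` is conjugation by a unitary. -/
def IsUnitaryConj {n : ℕ} (Φ : Matrix (Fin n) (Fin n) ℂ →ₗ[ℂ] Matrix (Fin n) (Fin n) ℂ) : Prop :=
  ∃ U ∈ Matrix.unitaryGroup (Fin n) ℂ, ∀ ρ, Φ ρ = U * ρ * Uᴴ

/-- A quantum channel is divisible if it factors into two channels neither of which is
a unitary conjugation. -/
def Divisible {n : ℕ} (Φ : Matrix (Fin n) (Fin n) ℂ →ₗ[ℂ] Matrix (Fin n) (Fin n) ℂ) : Prop :=
  ∃ Φ₁ Φ₂ : Matrix (Fin n) (Fin n) ℂ →ₗ[ℂ] Matrix (Fin n) (Fin n) ℂ,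
    IsChannel Φ₁ ∧ IsChannel Φ₂ ∧ Φ = Φ₁ ∘ₗ Φ₂ ∧ ¬ IsUnitaryConj Φ₁ ∧ ¬ IsUnitaryConj Φ₂

/-- `Z = conj(x) conj(x⊥)† ⊗ 1`. -/
def Zmat {n : ℕ} (x xp : Fin n → ℂ) : Matrix (Fin n × Fin n) (Fin n × Fin n) ℂ :=
  (Matrix.vecMulVec (star x) xp) ⊗ₖ (1 : Matrix (Fin n) (Fin n) ℂ)

/-!
Write `Φ = Θ ∘ Ψ` with `Θ = Φ ∘ Ψ⁻¹` completely positive. A matrix `Z` is orthogonal to the Kraus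
subspace of `Φ` only if `vec Z` lies in the kernel of the Choi matrix of `Φ`. That matrix is the sum
of the positive semidefinite Choi matrices of `Θ ∘ (K_λ · K_λ†)` and `Θ ∘ (L_λ · L_λ†)`, so `vec Z`
is in the kernel of the second one, i.e. `vec (Z L_λ†)` is in the kernel of the Choi matrix of `Θ`.
But `Z L_λ† = √λ (Z x) x⊥†` has rank one, so this says that `Θ(v x⊥†) Z x = 0` for all `v`. Finally
`Ψ` fixes `x⊥ x⊥†`, so that `Θ` and `Φ` agree on it.
-/

section PosSemidef

variable {ι κ 𝕜 : Type*} [Fintype ι] [Fintype κ] [RCLike 𝕜]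

theorem add_mulVec_eq_zero_iff_of_posSemidef {A B : Matrix ι ι 𝕜} (hA : A.PosSemidef)
    (hB : B.PosSemidef) (v : ι → 𝕜) : (A + B) *ᵥ v = 0 ↔ A *ᵥ v = 0 ∧ B *ᵥ v = 0 := by
  rw [← (hA.add hB).dotProduct_mulVec_zero_iff, ← hA.dotProduct_mulVec_zero_iff,
    ← hB.dotProduct_mulVec_zero_iff, add_mulVec, dotProduct_add]
  exact add_eq_zero_iff_of_nonneg (hA.dotProduct_mulVec_nonneg v) (hB.dotProduct_mulVec_nonneg v)

theorem mul_mul_conjTranspose_mulVec_eq_zero_iff_of_posSemidef {A : Matrix ι ι 𝕜}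
    (hA : A.PosSemidef) (B : Matrix κ ι 𝕜) (v : κ → 𝕜) :
    (B * A * Bᴴ) *ᵥ v = 0 ↔ A *ᵥ (Bᴴ *ᵥ v) = 0 := by
  rw [← (hA.mul_mul_conjTranspose_same B).dotProduct_mulVec_zero_iff,
    ← hA.dotProduct_mulVec_zero_iff, star_mulVec, conjTranspose_conjTranspose,
    ← dotProduct_mulVec, mulVec_mulVec, mulVec_mulVec, Matrix.mul_assoc]

end PosSemidef

section Sandwich

variable {l m n : ℕ}

theorem sandwich_apply (A : Matrix (Fin m) (Fin n) ℂ) (ρ : Matrix (Fin n) (Fin n) ℂ) :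
    sandwich A ρ = A * ρ * Aᴴ :=
  rfl

theorem sandwich_one : sandwich (1 : Matrix (Fin n) (Fin n) ℂ) = LinearMap.id := by
  ext1 ρ
  simp [sandwich_apply]

theorem sandwich_zero : sandwich (0 : Matrix (Fin m) (Fin n) ℂ) = 0 := by
  ext1 ρ
  simp [sandwich_apply]

theorem sandwich_smul (c : ℂ) (A : Matrix (Fin m) (Fin n) ℂ) :
    sandwich (c • A) = (c * star c) • sandwich A := by
  ext1 ρ
  simp [sandwich_apply, smul_smul, mul_comm]

theorem sandwich_comp_sandwich (A : Matrix (Fin l) (Fin m) ℂ) (B : Matrix (Fin m) (Fin n) ℂ) :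
    sandwich A ∘ₗ sandwich B = sandwich (A * B) := by
  ext1 ρ
  simp [sandwich_apply, Matrix.mul_assoc]

theorem sandwich_vecMulVec (A : Matrix (Fin m) (Fin n) ℂ) (u v : Fin n → ℂ) :
    sandwich A (vecMulVec u (star v)) = vecMulVec (A *ᵥ u) (star (A *ᵥ v)) := by
  rw [sandwich_apply, mul_vecMulVec, vecMulVec_mul, star_mulVec]

end Sandwich

section Choi

variable {l m n : ℕ}

theorem choi_apply (Φ : Matrix (Fin n) (Fin n) ℂ →ₗ[ℂ] Matrix (Fin m) (Fin m) ℂ)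
    (p q : Fin n × Fin m) : Choi Φ p q = Φ (single p.1 q.1 1) p.2 q.2 := by
  simp [Choi, Matrix.sum_apply, single_apply, ite_and]

theorem apply_eq_sum_choi (Φ : Matrix (Fin n) (Fin n) ℂ →ₗ[ℂ] Matrix (Fin m) (Fin m) ℂ)
    (ρ : Matrix (Fin n) (Fin n) ℂ) (i k : Fin m) :
    Φ ρ i k = ∑ a, ∑ b, ρ a b * Choi Φ (a, i) (b, k) := by
  have hsingle (a b : Fin n) : single a b (ρ a b) = ρ a b • single a b (1 : ℂ) := by simp
  conv_lhs => rw [matrix_eq_sum_single ρ]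
  simp_rw [hsingle, map_sum, map_smul, Matrix.sum_apply, Matrix.smul_apply, smul_eq_mul,
    choi_apply]

theorem choi_add (Φ Ψ : Matrix (Fin n) (Fin n) ℂ →ₗ[ℂ] Matrix (Fin m) (Fin m) ℂ) :
    Choi (Φ + Ψ) = Choi Φ + Choi Ψ := by
  ext p q
  simp [choi_apply]

theorem choi_comp_sandwich (Θ : Matrix (Fin n) (Fin n) ℂ →ₗ[ℂ] Matrix (Fin m) (Fin m) ℂ)
    (A : Matrix (Fin n) (Fin l) ℂ) :
    Choi (Θ ∘ₗ sandwich A) =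
      (Aᵀ ⊗ₖ (1 : Matrix (Fin m) (Fin m) ℂ)) * Choi Θ *
        (Aᵀ ⊗ₖ (1 : Matrix (Fin m) (Fin m) ℂ))ᴴ := by
  ext ⟨j, i⟩ ⟨k, i'⟩
  have hsingle (a b : Fin n) : sandwich A (single j k 1) a b = A a j * star (A b k) := by
    simp [sandwich_apply, Matrix.mul_apply, single_apply, ite_and]
  calc Choi (Θ ∘ₗ sandwich A) (j, i) (k, i')
      = ∑ b, ∑ a, A a j * star (A b k) * Choi Θ (a, i) (b, i') := by
        rw [choi_apply, LinearMap.comp_apply, apply_eq_sum_choi, Finset.sum_comm]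
        simp_rw [hsingle]
    _ = _ := by
        simp [Matrix.mul_apply, Fintype.sum_prod_type, one_apply, Finset.sum_mul, mul_right_comm,
          apply_ite]

theorem kronecker_one_conjTranspose_mulVec_vec (A : Matrix (Fin n) (Fin l) ℂ)
    (Z : Matrix (Fin m) (Fin l) ℂ) :
    (Aᵀ ⊗ₖ (1 : Matrix (Fin m) (Fin m) ℂ))ᴴ *ᵥ Z.vec = (Z * Aᴴ).vec := by
  rw [conjTranspose_kronecker, kronecker_mulVec_vec, conjTranspose_one, Matrix.one_mul]
  rfl

theorem choi_comp_sandwich_mulVec_vec_eq_zero_iff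
    {Θ : Matrix (Fin n) (Fin n) ℂ →ₗ[ℂ] Matrix (Fin m) (Fin m) ℂ} (hΘ : (Choi Θ).PosSemidef)
    (A : Matrix (Fin n) (Fin l) ℂ) (Z : Matrix (Fin m) (Fin l) ℂ) :
    Choi (Θ ∘ₗ sandwich A) *ᵥ Z.vec = 0 ↔ Choi Θ *ᵥ (Z * Aᴴ).vec = 0 := by
  rw [choi_comp_sandwich, mul_mul_conjTranspose_mulVec_eq_zero_iff_of_posSemidef hΘ,
    kronecker_one_conjTranspose_mulVec_vec]

theorem posSemidef_choi_comp_sandwich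
    {Θ : Matrix (Fin n) (Fin n) ℂ →ₗ[ℂ] Matrix (Fin m) (Fin m) ℂ} (hΘ : (Choi Θ).PosSemidef)
    (A : Matrix (Fin n) (Fin l) ℂ) : (Choi (Θ ∘ₗ sandwich A)).PosSemidef :=
  choi_comp_sandwich Θ A ▸ hΘ.mul_mul_conjTranspose_same _

theorem choi_mulVec_vec_of_kraus {ι : Type*} [Fintype ι]
    {Φ : Matrix (Fin n) (Fin n) ℂ →ₗ[ℂ] Matrix (Fin m) (Fin m) ℂ}
    {K : ι → Matrix (Fin m) (Fin n) ℂ} (hK : ∀ ρ, Φ ρ = ∑ j, K j * ρ * (K j)ᴴ)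
    (Z : Matrix (Fin m) (Fin n) ℂ) :
    Choi Φ *ᵥ Z.vec = ∑ j, ((K j)ᴴ * Z).trace • (K j).vec := by
  have hChoi : Choi Φ = ∑ j, vecMulVec (K j).vec (star (K j).vec) := by
    ext p q
    simp [choi_apply, hK, Matrix.sum_apply, Matrix.mul_apply, single_apply, ite_and,
      vecMulVec_apply, Matrix.vec]
  simp [hChoi, sum_mulVec, vecMulVec_mulVec, star_vec_dotProduct_vec]

theorem apply_vecMulVec_mulVec (Φ : Matrix (Fin n) (Fin n) ℂ →ₗ[ℂ] Matrix (Fin m) (Fin m) ℂ)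
    (v w : Fin n → ℂ) (u : Fin m → ℂ) (i : Fin m) :
    (Φ (vecMulVec v w) *ᵥ u) i = ∑ a, v a * (Choi Φ *ᵥ (vecMulVec u w).vec) (a, i) := by
  simp only [mulVec, dotProduct, apply_eq_sum_choi, vecMulVec_apply, Matrix.vec,
    Fintype.sum_prod_type_right, Finset.sum_mul, Finset.mul_sum]
  rw [Finset.sum_comm]
  exact Finset.sum_congr rfl fun a _ => Finset.sum_congr rfl fun k _ =>
    Finset.sum_congr rfl fun b _ => by ring

end Choi

section Psi

variable {n : ℕ} {lam : ℝ} {x y : Fin n → ℂ}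

theorem kmat_mulVec_of_dotProduct_eq_zero (h : star x ⬝ᵥ y = 0) : Kmat lam x *ᵥ y = y := by
  simp [Kmat, sub_mulVec, smul_mulVec, vecMulVec_mulVec, h]

theorem lmat_mulVec (lam : ℝ) (x y v : Fin n → ℂ) :
    Lmat lam x y *ᵥ v = ((Real.sqrt lam : ℂ) * (star x ⬝ᵥ v)) • y := by
  rw [Lmat, smul_mulVec, vecMulVec_mulVec, op_smul_eq_smul, smul_smul]

theorem psi_vecMulVec_self (h : star x ⬝ᵥ y = 0) :
    Psi lam x y (vecMulVec y (star y)) = vecMulVec y (star y) := by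
  simp [Psi, sandwich_vecMulVec, kmat_mulVec_of_dotProduct_eq_zero h, lmat_mulVec, h]

theorem mul_conjTranspose_lmat {m : ℕ} (Z : Matrix (Fin m) (Fin n) ℂ) :
    Z * (Lmat lam x y)ᴴ = (Real.sqrt lam : ℂ) • vecMulVec (Z *ᵥ x) (star y) := by
  simp [Lmat, conjTranspose_vecMulVec, mul_vecMulVec]

theorem kmat_mul_lmat (h : star x ⬝ᵥ y = 0) : Kmat lam x * Lmat lam x y = Lmat lam x y := by
  rw [Lmat, mul_smul_comm, mul_vecMulVec, kmat_mulVec_of_dotProduct_eq_zero h]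

theorem lmat_mul_lmat (h : star x ⬝ᵥ y = 0) : Lmat lam x y * Lmat lam x y = 0 := by
  simp [Lmat, vecMulVec_mul_vecMulVec, h]

theorem lmat_mul_kmat (hx : star x ⬝ᵥ x = 1) :
    Lmat lam x y * Kmat lam x = (Real.sqrt (1 - lam) : ℂ) • Lmat lam x y := by
  simp only [Lmat, Kmat, mul_sub, mul_one, smul_mul_assoc, mul_smul_comm,
    vecMulVec_mul_vecMulVec, hx, one_smul]
  push_cast
  module

theorem det_kmat (hx : star x ⬝ᵥ x = 1) : (Kmat lam x).det = (Real.sqrt (1 - lam) : ℂ) := by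
  rw [Kmat, sub_eq_add_neg, ← neg_smul, ← smul_vecMulVec, vecMulVec_eq Unit,
    det_one_add_replicateCol_mul_replicateRow, dotProduct_smul, hx]
  simp

theorem psiInv_comp_psi (hlam : lam < 1) (hx : star x ⬝ᵥ x = 1) (h : star x ⬝ᵥ y = 0) :
    PsiInv lam x y ∘ₗ Psi lam x y = LinearMap.id := by
  have hdet : IsUnit (Kmat lam x).det := by
    rw [det_kmat hx, isUnit_iff_ne_zero]
    exact_mod_cast (Real.sqrt_pos.2 (sub_pos.2 hlam)).ne'
  have hKL : (Kmat lam x)⁻¹ * Lmat lam x y = Lmat lam x y := by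
    conv_lhs => rw [← kmat_mul_lmat h, nonsing_inv_mul_cancel_left _ _ hdet]
  have hscalar : (((1 - lam)⁻¹ : ℝ) : ℂ) *
      ((Real.sqrt (1 - lam) : ℂ) * star (Real.sqrt (1 - lam) : ℂ)) = 1 := by
    rw [Complex.star_def, Complex.conj_ofReal]
    norm_cast
    rw [Real.mul_self_sqrt (sub_nonneg.2 hlam.le), inv_mul_cancel₀ (sub_ne_zero.2 hlam.ne')]
  rw [PsiInv, Psi, LinearMap.sub_comp, LinearMap.smul_comp, LinearMap.comp_add, LinearMap.comp_add]
  simp only [sandwich_comp_sandwich, nonsing_inv_mul _ hdet, hKL, lmat_mul_kmat hx,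
    lmat_mul_lmat h, sandwich_one, sandwich_smul, sandwich_zero, add_zero, smul_smul, hscalar,
    one_smul, add_sub_cancel_right]

end Psi

theorem necessary_criterion_general {m n : ℕ} {ι : Type*} [Fintype ι]
    {K : ι → Matrix (Fin m) (Fin n) ℂ}
    {Φ Θ : Matrix (Fin n) (Fin n) ℂ →ₗ[ℂ] Matrix (Fin m) (Fin m) ℂ}
    (hKraus : ∀ ρ, Φ ρ = ∑ j, K j * ρ * (K j)ᴴ) {x xp : Fin n → ℂ} (horth : star x ⬝ᵥ xp = 0)
    {lam : ℝ} (hlam : lam ∈ Set.Ioc (0 : ℝ) 1) (hΘ : (Choi Θ).PosSemidef)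
    (hfactor : Φ = Θ ∘ₗ Psi lam x xp) {Z : Matrix (Fin m) (Fin n) ℂ}
    (hZ : ∀ j, ((K j)ᴴ * Z).trace = 0) :
    (Φ (vecMulVec xp (star xp)) * Z) *ᵥ x = 0 := by
  have hsqrt : (Real.sqrt lam : ℂ) ≠ 0 := by
    exact_mod_cast (Real.sqrt_pos.2 hlam.1).ne'
  have hΦ : Choi Φ *ᵥ Z.vec = 0 := by simp [choi_mulVec_vec_of_kraus hKraus, hZ]
  have hΘL : Choi (Θ ∘ₗ sandwich (Lmat lam x xp)) *ᵥ Z.vec = 0 := by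
    rw [hfactor, Psi, LinearMap.comp_add, choi_add, add_mulVec_eq_zero_iff_of_posSemidef
      (posSemidef_choi_comp_sandwich hΘ _) (posSemidef_choi_comp_sandwich hΘ _)] at hΦ
    exact hΦ.2
  have hΘZ : Choi Θ *ᵥ (vecMulVec (Z *ᵥ x) (star xp)).vec = 0 := by
    rwa [choi_comp_sandwich_mulVec_vec_eq_zero_iff hΘ, mul_conjTranspose_lmat, vec_smul,
      mulVec_smul, smul_eq_zero_iff_right hsqrt] at hΘL
  have hfix : Φ (vecMulVec xp (star xp)) = Θ (vecMulVec xp (star xp)) := by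
    rw [hfactor, LinearMap.comp_apply, psi_vecMulVec_self horth]
  ext i
  rw [hfix, ← mulVec_mulVec, apply_vecMulVec_mulVec]
  simp [hΘZ]

/-- necessary criterion. If `Φ ∘ Ψ_λ⁻¹` is CP for some `λ ∈ (0,1)`, then
`Φ(x⊥ x⊥†) Z x = 0` for all `Z ∈ K_Φ^⊥`. -/
theorem necessary_criterion (n r : ℕ) (K : Fin r → Matrix (Fin n) (Fin n) ℂ)
    (Φ : Matrix (Fin n) (Fin n) ℂ →ₗ[ℂ] Matrix (Fin n) (Fin n) ℂ)
    (hKraus : ∀ ρ, Φ ρ = ∑ j, K j * ρ * (K j)ᴴ) (hΦ : IsChannel Φ)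
    (x xp : Fin n → ℂ)
    (hx : star x ⬝ᵥ x = 1) (hxp : star xp ⬝ᵥ xp = 1) (horth : star x ⬝ᵥ xp = 0)
    (lam : ℝ) (hlam : lam ∈ Set.Ioo (0 : ℝ) 1)
    (hCP : IsCP (Φ ∘ₗ PsiInv lam x xp)) :
    ∀ Z : Matrix (Fin n) (Fin n) ℂ, (∀ j, ((K j)ᴴ * Z).trace = 0) →
      (Φ (Matrix.vecMulVec xp (star xp)) * Z) *ᵥ x = 0 := by
  intro Z hZ
  have hfactor : Φ = (Φ ∘ₗ PsiInv lam x xp) ∘ₗ Psi lam x xp := by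
    rw [LinearMap.comp_assoc, psiInv_comp_psi hlam.2 hx horth, LinearMap.comp_id]
  exact necessary_criterion_general hKraus horth (Set.Ioo_subset_Ioc_self hlam) hCP hfactor hZ

end
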